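/- The transfer matrix is a scalar multiple of the identity at the following special points, and has scalar asymptotics: (i) T(η/2) = T(−η/2) = (−1)^N · 2 cosh η · a(η/2) d(−η/2) · Id; (ii) T(η/2 − iπ/2) = T(−(η/2 − iπ/2)) = −2 cosh η · coth ζ₋ · coth ζ₊ · a(iπ/2 + η/2) d(iπ/2 − η/2) · Id (assume sinh ζ₊ ≠ 0, sinh ζ₋ ≠ 0); (iii) for real λ → ±∞, e^{∓2λ(N+2)} T(λ) converges entrywise to 2^{−(2N+1)} (κ₊κ₋ cosh(τ₊ − τ₋)/(sinh ζ₊ sinh ζ₋)) · Id. -/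

import Mathlib

/-!
Operators on `ℂ²₀ ⊗ (ℂ²)^{⊗N}` are `2 × 2` matrices with entries in the algebra of operators on the
quantum space, where `σ⁰ʸ X^{t₀} σ⁰ʸ` becomes the cross transpose `X ↦ σʸ Xᵀ σʸ`. Crossing symmetry
of the `R`-matrix turns `M̂(λ)` into the product of the `R(λ + ξₖ - η/2)` in the order opposite to
that of `M(λ)`, so the transfer matrix reads
`tr₀ (K₊ R(λ - ξ_N - η/2) ⋯ R(λ - ξ_1 - η/2) K₋ R(λ + ξ_1 - η/2) ⋯ R(λ + ξ_N - η/2))`.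
If the `R`-matrices of every site, placed around `K₋`, give back a multiple of `K₋`, then the
product collapses from the inside to a multiple of `K₋`, and the trace is a scalar. This happens
three times: at `η/2`, where `K₋ = 1`, by unitarity; at `η/2 - iπ/2`, where `K₋` is proportional to
`σᶻ`, by unitarity combined with the quasi-periodicity `R(u - iπ) = -σ⁰ᶻ R(u) σ⁰ᶻ`; and in the limit
`λ → +∞`, where the `R`-matrices become diagonal and `K₋` off-diagonal.

The opposite points and the limit `λ → -∞` reduce to these. Because the entries of `K₊` and `K₋` are
scalars, the trace does not change when all factors are replaced by their cross transposes and the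
two boundary matrices are exchanged; by crossing this amounts to `λ ↦ -λ`, `ξ ↦ -ξ`, reversing the
order of the sites and swapping the boundary parameters.
-/

open Complex Finset

noncomputable section

namespace XXZ

/-- `a(λ) = ∏ₙ sinh(λ - ξₙ + η/2)` -/
def aF (N : ℕ) (η : ℂ) (ξ : Fin N → ℂ) (z : ℂ) : ℂ :=
  ∏ n : Fin N, Complex.sinh (z - ξ n + η / 2)

/-- `d(λ) = a(λ - η)` -/
def dF (N : ℕ) (η : ℂ) (ξ : Fin N → ℂ) (z : ℂ) : ℂ := aF N η ξ (z - η)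
/-- the index type of the quantum space `(ℂ²)^{⊗N}` together with the auxiliary space -/
abbrev FullIdx (N : ℕ) := Fin 2 × (Fin N → Fin 2)

/-- the trigonometric 6-vertex `R`-matrix -/
def Rmat (η : ℂ) (z : ℂ) : Matrix (Fin 2 × Fin 2) (Fin 2 × Fin 2) ℂ :=
  fun p q =>
    if p = q then (if p.1 = p.2 then Complex.sinh (z + η) else Complex.sinh z)
    else if p.1 = q.2 ∧ p.2 = q.1 then Complex.sinh η else 0

/-- the Pauli matrix `σʸ` -/
def sigmaY : Matrix (Fin 2) (Fin 2) ℂ := !![0, -Complex.I; Complex.I, 0]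

/-- the Pauli matrix `σᶻ` -/
def sigmaZ : Matrix (Fin 2) (Fin 2) ℂ := !![1, 0; 0, -1]

/-- a `2×2` matrix acting on the auxiliary space (factor `0`) -/
def auxOp (N : ℕ) (K : Matrix (Fin 2) (Fin 2) ℂ) :
    Matrix (FullIdx N) (FullIdx N) ℂ :=
  fun p q => K p.1 q.1 * (if p.2 = q.2 then 1 else 0)

/-- `R_{0n}(z)`: the `R`-matrix acting on the auxiliary space and the `n`-th site -/
def R0n (N : ℕ) (η : ℂ) (n : Fin N) (z : ℂ) :
    Matrix (FullIdx N) (FullIdx N) ℂ :=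
  fun p q =>
    Rmat η z (p.1, p.2 n) (q.1, q.2 n) *
      (if ∀ m : Fin N, m ≠ n → p.2 m = q.2 m then 1 else 0)

/-- the bulk monodromy matrix `M(λ) = R_{0N}(λ-ξ_N-η/2) ⋯ R_{01}(λ-ξ_1-η/2)` -/
def Mmono (N : ℕ) (η : ℂ) (ξ : Fin N → ℂ) (z : ℂ) :
    Matrix (FullIdx N) (FullIdx N) ℂ :=
  (List.ofFn fun k : Fin N => R0n N η k.rev (z - ξ k.rev - η / 2)).prod

/-- partial transposition in the auxiliary space (factor `0`) -/
def pt0 (N : ℕ) (A : Matrix (FullIdx N) (FullIdx N) ℂ) :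
    Matrix (FullIdx N) (FullIdx N) ℂ :=
  fun p q => A (q.1, p.2) (p.1, q.2)

/-- `M̂(λ) = (-1)^N σ⁰ʸ M(-λ)^{t₀} σ⁰ʸ` -/
def Mhat (N : ℕ) (η : ℂ) (ξ : Fin N → ℂ) (z : ℂ) :
    Matrix (FullIdx N) (FullIdx N) ℂ :=
  ((-1 : ℂ) ^ N) • (auxOp N sigmaY * pt0 N (Mmono N η ξ (-z)) * auxOp N sigmaY)

/-- the general scalar solution `K(λ; ζ, κ, τ)` of the reflection equation -/
def Kmat (η : ℂ) (z ζ κ τ : ℂ) : Matrix (Fin 2) (Fin 2) ℂ :=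
  (1 / Complex.sinh ζ) •
    !![Complex.sinh (z - η / 2 + ζ), κ * Complex.exp τ * Complex.sinh (2 * z - η);
      κ * Complex.exp (-τ) * Complex.sinh (2 * z - η), Complex.sinh (ζ - z + η / 2)]

/-- `K₋(λ) = K(λ; ζ₋, κ₋, τ₋)` -/
def Kminus (η ζm κm τm : ℂ) (z : ℂ) : Matrix (Fin 2) (Fin 2) ℂ := Kmat η z ζm κm τm

/-- `K₊(λ) = K(λ+η; ζ₊, κ₊, τ₊)` -/
def Kplus (η ζp κp τp : ℂ) (z : ℂ) : Matrix (Fin 2) (Fin 2) ℂ := Kmat η (z + η) ζp κp τp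

/-- partial trace over the auxiliary space -/
def tr0 (N : ℕ) (A : Matrix (FullIdx N) (FullIdx N) ℂ) :
    Matrix (Fin N → Fin 2) (Fin N → Fin 2) ℂ :=
  fun s t => ∑ i : Fin 2, A (i, s) (i, t)

/-- the transfer matrix `T(λ) = tr₀{K₊(λ) M(λ) K₋(λ) M̂(λ)}` -/
def Tmat (N : ℕ) (η : ℂ) (ξ : Fin N → ℂ) (ζp ζm κp κm τp τm : ℂ) (z : ℂ) :
    Matrix (Fin N → Fin 2) (Fin N → Fin 2) ℂ :=
  tr0 N (auxOp N (Kplus η ζp κp τp z) * Mmono N η ξ z *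
    auxOp N (Kminus η ζm κm τm z) * Mhat N η ξ z)

open scoped Kronecker

/-! ### Matrices with noncommuting entries -/

section Dressing

variable {R A m ι : Type*} [CommRing R] [Ring A] [Algebra R A]

lemma list_prod_mul_mul_list_prod_reverse {L L' : ι → A} {X : A} {c : ι → R}
    (h : ∀ k, L k * X * L' k = c k • X) (l : List ι) :
    (l.map L).prod * X * (l.reverse.map L').prod = (l.map c).prod • X := by
  induction l with
  | nil => simp
  | cons k l ih =>
    calc ((k :: l).map L).prod * X * ((k :: l).reverse.map L').prod
        = L k * ((l.map L).prod * X * (l.reverse.map L').prod) * L' k := by simp [mul_assoc]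
      _ = ((k :: l).map c).prod • X := by
        rw [ih, mul_smul_comm, smul_mul_assoc, h, smul_smul, mul_comm, List.map_cons,
          List.prod_cons]

lemma list_prod_map_smul (b : R) (L : ι → A) (l : List ι) :
    (l.map fun k => b • L k).prod = b ^ l.length • (l.map L).prod := by
  rw [← List.length_map L, List.smul_prod, List.map_map, Function.comp_def]

variable [Fintype m] [DecidableEq m]

/-- The matrix `K` over the ground ring, seen as a matrix over the algebra `A`: in the paper's
notation, `K` acting on the auxiliary space. -/
def constEntries : Matrix m m R →ₐ[R] Matrix m m A := (Algebra.ofId R A).mapMatrix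

lemma constEntries_apply (K : Matrix m m R) (i j : m) :
    (constEntries K : Matrix m m A) i j = algebraMap R A (K i j) := rfl

lemma trace_constEntries (K : Matrix m m R) :
    (constEntries K : Matrix m m A).trace = K.trace • 1 := by
  simp [Matrix.trace, constEntries_apply, Algebra.algebraMap_eq_smul_one, Finset.sum_smul]

/-- The trace `tr (K L₁ ⋯ Lₙ K' L'ₙ ⋯ L'₁)` over the auxiliary space, for boundary matrices `K`,
`K'` and local operators `Lₖ`, `L'ₖ` at the sites of the list `l`. An operator on the tensor
product of the auxiliary and quantum spaces is encoded as a matrix over the algebra `A` of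
operators on the quantum space. -/
def doubleRow (K K' : Matrix m m R) (L L' : ι → Matrix m m A) (l : List ι) : A :=
  (constEntries K * (l.map L).prod * constEntries K' * (l.reverse.map L').prod).trace

lemma doubleRow_of_dressing {K K' : Matrix m m R} {L L' : ι → Matrix m m A} {c : ι → R}
    (h : ∀ k, L k * constEntries K' * L' k = c k • constEntries K') (l : List ι) :
    doubleRow K K' L L' l = ((l.map c).prod * (K * K').trace) • 1 := by
  rw [doubleRow, mul_assoc, mul_assoc, ← mul_assoc (List.prod _),
    list_prod_mul_mul_list_prod_reverse h, mul_smul_comm, ← map_mul, Matrix.trace_smul,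
    trace_constEntries, smul_smul]

lemma doubleRow_smul (a a' b b' : R) (K K' : Matrix m m R) (L L' : ι → Matrix m m A)
    (l : List ι) :
    doubleRow (a • K) (a' • K') (fun k => b • L k) (fun k => b' • L' k) l =
      (a * a' * (b * b') ^ l.length) • doubleRow K K' L L' l := by
  simp only [doubleRow, map_smul, list_prod_map_smul, List.length_reverse, smul_mul_assoc,
    mul_smul_comm, Matrix.trace_smul, smul_smul]
  congr 1
  ring

lemma tendsto_doubleRow [TopologicalSpace R] [TopologicalSpace A] [IsTopologicalRing A]
    [ContinuousSMul R A] {α : Type*} {f : Filter α} {K K' : α → Matrix m m R}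
    {L L' : α → ι → Matrix m m A} {K₀ K₀' : Matrix m m R} {L₀ L₀' : ι → Matrix m m A}
    (hK : Filter.Tendsto K f (nhds K₀)) (hK' : Filter.Tendsto K' f (nhds K₀'))
    (hL : ∀ k, Filter.Tendsto (fun x => L x k) f (nhds (L₀ k)))
    (hL' : ∀ k, Filter.Tendsto (fun x => L' x k) f (nhds (L₀' k))) (l : List ι) :
    Filter.Tendsto (fun x => doubleRow (K x) (K' x) (L x) (L' x) l) f
      (nhds (doubleRow K₀ K₀' L₀ L₀' l)) := by
  have continuous_constEntries : Continuous (constEntries : Matrix m m R → Matrix m m A) :=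
    continuous_id.matrix_map (continuous_algebraMap R A)
  have continuous_trace : Continuous (Matrix.trace : Matrix m m A → A) :=
    continuous_id.matrix_trace
  exact (continuous_trace.tendsto _).comp <|
    ((((continuous_constEntries.tendsto _).comp hK).mul
      (tendsto_list_prod l fun k _ => hL k)).mul
      ((continuous_constEntries.tendsto _).comp hK')).mul
      (tendsto_list_prod l.reverse fun k _ => hL' k)

end Dressing

section CrossTranspose

variable {R A B ι : Type*} [CommRing R] [Ring A] [Ring B] [Algebra R A] [Algebra R B]

/-- Every entry of `M` commutes with every entry of `M'`, as happens for operators acting on the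
auxiliary space and on disjoint sets of sites. -/
def CommutingEntries {m : Type*} (M M' : Matrix m m A) : Prop :=
  ∀ i j k l, Commute (M i j) (M' k l)

lemma CommutingEntries.mul_right {m : Type*} [Fintype m] {M M₁ M₂ : Matrix m m A}
    (h₁ : CommutingEntries M M₁) (h₂ : CommutingEntries M M₂) :
    CommutingEntries M (M₁ * M₂) := by
  intro i j k l
  rw [Matrix.mul_apply]
  exact Commute.sum_right _ _ _ fun a _ => (h₁ i j k a).mul_right (h₂ i j a l)

lemma CommutingEntries.list_prod_right {m : Type*} [Fintype m] [DecidableEq m]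
    {M : Matrix m m A} {l : List (Matrix m m A)} (h : ∀ M' ∈ l, CommutingEntries M M') :
    CommutingEntries M l.prod := by
  refine List.prod_induction (CommutingEntries M) (fun _ _ => mul_right) (fun i j k l => ?_) h
  rw [Matrix.one_apply]
  split_ifs
  exacts [Commute.one_right _, Commute.zero_right _]

/-- `σʸ Mᵀ σʸ`. It is the adjugate when the entries commute. -/
def crossTranspose (M : Matrix (Fin 2) (Fin 2) A) : Matrix (Fin 2) (Fin 2) A :=
  !![M 1 1, -M 0 1; -M 1 0, M 0 0]

lemma crossTranspose_one : crossTranspose (1 : Matrix (Fin 2) (Fin 2) A) = 1 := by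
  simp [crossTranspose, Matrix.one_fin_two]

lemma crossTranspose_mul {M M' : Matrix (Fin 2) (Fin 2) A} (h : CommutingEntries M M') :
    crossTranspose (M * M') = crossTranspose M' * crossTranspose M := by
  ext i j
  fin_cases i <;> fin_cases j <;>
    simp [crossTranspose, Matrix.mul_apply, (h _ _ _ _).eq, add_comm]

lemma crossTranspose_list_prod {l : List (Matrix (Fin 2) (Fin 2) A)}
    (h : l.Pairwise CommutingEntries) :
    crossTranspose l.prod = (l.reverse.map crossTranspose).prod := by
  induction h with
  | nil => exact crossTranspose_one
  | cons hM _ ih =>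
    simp [crossTranspose_mul (CommutingEntries.list_prod_right hM), ih]

lemma crossTranspose_list_prod_map {L : ι → Matrix (Fin 2) (Fin 2) A}
    (h : Pairwise fun j k => CommutingEntries (L j) (L k)) {l : List ι} (hl : l.Nodup) :
    crossTranspose (l.map L).prod = (l.reverse.map fun k => crossTranspose (L k)).prod := by
  rw [crossTranspose_list_prod, ← List.map_reverse, List.map_map]
  · rfl
  · exact List.pairwise_map.2 (hl.pairwise_of_forall_ne fun j _ k _ hjk => h hjk)

lemma crossTranspose_mapMatrix (φ : A →ₐ[R] B) (M : Matrix (Fin 2) (Fin 2) A) :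
    crossTranspose (φ.mapMatrix M) = φ.mapMatrix (crossTranspose M) := by
  ext i j
  fin_cases i <;> fin_cases j <;> simp [crossTranspose]

lemma constEntries_sigmaY_mul_transpose_mul [Algebra ℂ A] (M : Matrix (Fin 2) (Fin 2) A) :
    constEntries sigmaY * M.transpose * constEntries sigmaY = crossTranspose M := by
  ext i j
  fin_cases i <;> fin_cases j <;>
    simp [crossTranspose, Matrix.mul_apply, constEntries_apply, sigmaY,
      Algebra.algebraMap_eq_smul_one, smul_smul]

/-- Since the entries of `K` and `K'` are central, the factors of
`tr (K M K' M') = ∑ Kᵢⱼ Mⱼₖ K'ₖₗ M'ₗᵢ` can be reordered as `∑ K'ₖₗ Mⱼₖ Kᵢⱼ M'ₗᵢ`, a trace of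
transposes; conjugation by `σʸ` does not change it. -/
lemma trace_constEntries_mul_crossTranspose (K K' : Matrix (Fin 2) (Fin 2) R)
    (M M' : Matrix (Fin 2) (Fin 2) A) :
    (constEntries K * M * constEntries K' * M').trace =
      (constEntries K'.adjugate * crossTranspose M * constEntries K.adjugate *
        crossTranspose M').trace := by
  simp only [Matrix.trace_fin_two, Matrix.mul_apply, Fin.sum_univ_two, Matrix.adjugate_fin_two,
    crossTranspose, constEntries_apply, Algebra.algebraMap_eq_smul_one, Matrix.of_apply,
    Matrix.cons_val_zero, Matrix.cons_val_one, smul_mul_assoc, mul_smul_comm, one_mul, mul_one,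
    add_mul, neg_mul, mul_neg]
  module

lemma doubleRow_eq_crossTranspose {L L' : ι → Matrix (Fin 2) (Fin 2) A}
    (hL : Pairwise fun j k => CommutingEntries (L j) (L k))
    (hL' : Pairwise fun j k => CommutingEntries (L' j) (L' k))
    (K K' : Matrix (Fin 2) (Fin 2) R) {l : List ι} (hl : l.Nodup) :
    doubleRow K K' L L' l =
      doubleRow K'.adjugate K.adjugate (fun k => crossTranspose (L k))
        (fun k => crossTranspose (L' k)) l.reverse := by
  rw [doubleRow, trace_constEntries_mul_crossTranspose, crossTranspose_list_prod_map hL hl,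
    crossTranspose_list_prod_map hL' (List.nodup_reverse.2 hl), doubleRow]

end CrossTranspose

/-! ### Operators at a site of the chain -/

section Sites

variable {R n ι : Type*} [CommRing R] [Fintype n] [DecidableEq n] [Fintype ι] [DecidableEq ι]

/-- The tensor product of the matrices `E k`, as a matrix on `(Rⁿ)^{⊗ι}`. -/
def piKronecker : (ι → Matrix n n R) →* Matrix (ι → n) (ι → n) R where
  toFun E := Matrix.of fun s t => ∏ k, E k (s k) (t k)
  map_one' := by
    ext s t
    simp [Matrix.one_apply, Fintype.prod_boole, funext_iff]
  map_mul' E F := by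
    ext s t
    simp only [Pi.mul_apply, Matrix.mul_apply, Matrix.of_apply, Fintype.prod_sum,
      Finset.prod_mul_distrib]

lemma piKronecker_mulSingle_apply (k : ι) (E : Matrix n n R) (s t : ι → n) :
    piKronecker (Pi.mulSingle k E) s t =
      E (s k) (t k) * if ∀ j, j ≠ k → s j = t j then 1 else 0 := by
  have other_sites : ∏ j ∈ {k}ᶜ, (Pi.mulSingle k E : ι → Matrix n n R) j (s j) (t j) =
      ∏ j ∈ {k}ᶜ, if s j = t j then 1 else 0 := by
    refine Finset.prod_congr rfl fun j hj => ?_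
    rw [Pi.mulSingle_eq_of_ne (by simpa using hj), Matrix.one_apply]
  change ∏ j, _ = _
  rw [Fintype.prod_eq_mul_prod_compl k, other_sites, Pi.mulSingle_eq_same, Finset.prod_boole]
  simp

/-- A matrix acting on the `k`-th factor of `(Rⁿ)^{⊗ι}`. -/
def siteOp (k : ι) : Matrix n n R →ₐ[R] Matrix (ι → n) (ι → n) R :=
  AlgHom.ofLinearMap
    { toFun := fun E => piKronecker (Pi.mulSingle k E)
      map_add' := fun E F => by
        ext s t
        simp only [piKronecker_mulSingle_apply, Matrix.add_apply, add_mul]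
      map_smul' := fun c E => by
        ext s t
        simp only [piKronecker_mulSingle_apply, Matrix.smul_apply, smul_mul_assoc,
          RingHom.id_apply] }
    (map_one (piKronecker.comp (MonoidHom.mulSingle (fun _ => Matrix n n R) k)))
    (map_mul (piKronecker.comp (MonoidHom.mulSingle (fun _ => Matrix n n R) k)))

lemma siteOp_apply (k : ι) (E : Matrix n n R) (s t : ι → n) :
    siteOp k E s t = E (s k) (t k) * if ∀ j, j ≠ k → s j = t j then 1 else 0 :=
  piKronecker_mulSingle_apply k E s t

lemma siteOp_commute :
    Pairwise fun j k : ι => ∀ E F : Matrix n n R, Commute (siteOp j E) (siteOp k F) :=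
  fun _ _ hjk E F =>
    (Pi.mulSingle_commute (f := fun _ => Matrix n n R) hjk E F).map (piKronecker (R := R))

end Sites

section LocalOperators

variable {R A m n : Type*} [CommRing R] [Ring A] [Algebra R A] [Fintype m] [DecidableEq m]
  [Fintype n] [DecidableEq n]

/-- A matrix `r` on the tensor product of the auxiliary space with one site, acting on that site
through `φ`. -/
def localOp (φ : Matrix n n R →ₐ[R] A) : Matrix (m × n) (m × n) R →ₐ[R] Matrix m m A :=
  φ.mapMatrix.comp (Matrix.compAlgEquiv m n R R).symm.toAlgHom

lemma localOp_apply (φ : Matrix n n R →ₐ[R] A) (r : Matrix (m × n) (m × n) R) (i j : m) :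
    localOp φ r i j = φ ((Matrix.comp m m n n R).symm r i j) := rfl

lemma localOp_kronecker_one (φ : Matrix n n R →ₐ[R] A) (K : Matrix m m R) :
    localOp φ (K ⊗ₖ 1) = constEntries K := by
  ext i j
  have block_eq : (Matrix.comp m m n n R).symm (K ⊗ₖ 1) i j = K i j • 1 := rfl
  rw [localOp_apply, block_eq, map_smul, map_one, constEntries_apply,
    Algebra.algebraMap_eq_smul_one]

lemma localOp_mul_constEntries_mul_localOp (φ : Matrix n n R →ₐ[R] A) {K : Matrix m m R}
    {r r' : Matrix (m × n) (m × n) R} {c : R} (h : r * (K ⊗ₖ 1) * r' = c • (K ⊗ₖ 1)) :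
    localOp φ r * constEntries K * localOp φ r' = c • constEntries K := by
  rw [← localOp_kronecker_one φ, ← map_mul, ← map_mul, h, map_smul]

lemma commutingEntries_localOp {φ ψ : Matrix n n R →ₐ[R] A}
    (h : ∀ E F, Commute (φ E) (ψ F)) (r r' : Matrix (m × n) (m × n) R) :
    CommutingEntries (localOp φ r) (localOp ψ r') :=
  fun _ _ _ _ => h _ _

lemma continuous_localOp {A : Type*} [Ring A] [Algebra ℂ A] [TopologicalSpace A]
    [IsTopologicalRing A] [ContinuousSMul ℂ A] (φ : Matrix n n ℂ →ₐ[ℂ] A) :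
    Continuous (localOp φ : Matrix (m × n) (m × n) ℂ → Matrix m m A) :=
  LinearMap.continuous_of_finiteDimensional (localOp φ).toLinearMap

end LocalOperators

section FullSpace

variable {N : ℕ}

/-- An operator on the full space, as a `2 × 2` matrix of operators on the quantum space. -/
def auxBlocks : Matrix (FullIdx N) (FullIdx N) ℂ ≃ₐ[ℂ]
    Matrix (Fin 2) (Fin 2) (Matrix (Fin N → Fin 2) (Fin N → Fin 2) ℂ) :=
  (Matrix.compAlgEquiv (Fin 2) (Fin N → Fin 2) ℂ ℂ).symm

lemma auxBlocks_auxOp (K : Matrix (Fin 2) (Fin 2) ℂ) :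
    auxBlocks (auxOp N K) = constEntries K := by
  ext i j s t
  simp [auxBlocks, auxOp, constEntries_apply, Algebra.algebraMap_eq_smul_one, Matrix.one_apply]

lemma auxBlocks_R0n (η : ℂ) (k : Fin N) (z : ℂ) :
    auxBlocks (R0n N η k z) = localOp (siteOp k) (Rmat η z) := by
  ext i j s t
  rw [localOp_apply, siteOp_apply]
  simp [auxBlocks, R0n]

lemma tr0_eq_trace (X : Matrix (FullIdx N) (FullIdx N) ℂ) : tr0 N X = (auxBlocks X).trace := by
  ext s t
  simp [tr0, auxBlocks, Matrix.trace_fin_two]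

lemma auxBlocks_pt0 (X : Matrix (FullIdx N) (FullIdx N) ℂ) :
    auxBlocks (pt0 N X) = (auxBlocks X).transpose := rfl

lemma auxBlocks_Mmono (η : ℂ) (ξ : Fin N → ℂ) (z : ℂ) :
    auxBlocks (Mmono N η ξ z) = ((List.finRange N).reverse.map fun k =>
      localOp (siteOp k) (Rmat η (z - ξ k - η / 2))).prod := by
  rw [Mmono, map_list_prod, List.ofFn_eq_map, List.finRange_reverse, List.map_map, List.map_map]
  simp only [Function.comp_def, auxBlocks_R0n]

end FullSpace

/-! ### The six-vertex `R`-matrix -/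

section SixVertex

lemma crossTranspose_comp_symm_Rmat (η u : ℂ) :
    crossTranspose ((Matrix.comp _ _ _ _ ℂ).symm (Rmat η u)) =
      (Matrix.comp _ _ _ _ ℂ).symm (-Rmat η (-u - η)) := by
  have sinh_crossed : sinh (-u - η) = -sinh (u + η) := by rw [← sinh_neg, neg_add']
  ext i j a b
  fin_cases i <;> fin_cases j <;> fin_cases a <;> fin_cases b <;>
    simp [crossTranspose, Rmat, sinh_crossed]

lemma crossTranspose_localOp_Rmat {A : Type*} [Ring A] [Algebra ℂ A]
    (φ : Matrix (Fin 2) (Fin 2) ℂ →ₐ[ℂ] A) (η u : ℂ) :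
    crossTranspose (localOp φ (Rmat η u)) = -localOp φ (Rmat η (-u - η)) := by
  have h := congrArg φ.mapMatrix (crossTranspose_comp_symm_Rmat η u)
  rw [← crossTranspose_mapMatrix] at h
  exact h.trans (map_neg (localOp φ) _)

lemma Rmat_mul_Rmat_neg (η u : ℂ) :
    Rmat η u * Rmat η (-u) = (sinh (η + u) * sinh (η - u)) • 1 := by
  ext ⟨i, a⟩ ⟨j, b⟩
  fin_cases i <;> fin_cases a <;> fin_cases j <;> fin_cases b <;>
    simp [Rmat, Matrix.mul_apply, Fintype.sum_prod_type, sinh_add, sinh_sub] <;>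
    grind [cosh_sq u, cosh_sq η]

lemma Rmat_sub_pi_mul_I (η u : ℂ) :
    Rmat η (u - Real.pi * I) = -((sigmaZ ⊗ₖ 1) * Rmat η u * (sigmaZ ⊗ₖ 1)) := by
  have sinh_shift : sinh (u - Real.pi * I + η) = -sinh (u + η) := by
    rw [sub_add_eq_add_sub, sinh_sub_pi_mul_I]
  ext ⟨i, a⟩ ⟨j, b⟩
  fin_cases i <;> fin_cases a <;> fin_cases j <;> fin_cases b <;>
    simp [Rmat, sigmaZ, Matrix.mul_apply, Fintype.sum_prod_type, sinh_shift,
      sinh_sub_pi_mul_I, Matrix.one_apply]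

lemma sigmaZ_kronecker_one_mul_self :
    (sigmaZ ⊗ₖ 1) * (sigmaZ ⊗ₖ 1) = (1 : Matrix (Fin 2 × Fin 2) (Fin 2 × Fin 2) ℂ) := by
  rw [← Matrix.mul_kronecker_mul, one_mul]
  simp [sigmaZ, ← Matrix.one_fin_two]

lemma Rmat_mul_sigmaZ_mul_Rmat (η u : ℂ) :
    Rmat η u * (sigmaZ ⊗ₖ 1) * Rmat η (-u - Real.pi * I) =
      -(sinh (η + u) * sinh (η - u)) • (sigmaZ ⊗ₖ 1) := by
  calc Rmat η u * (sigmaZ ⊗ₖ 1) * Rmat η (-u - Real.pi * I)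
      = -(Rmat η u * ((sigmaZ ⊗ₖ 1) * (sigmaZ ⊗ₖ 1)) * Rmat η (-u) * (sigmaZ ⊗ₖ 1)) := by
        rw [Rmat_sub_pi_mul_I]
        noncomm_ring
    _ = -(sinh (η + u) * sinh (η - u)) • (sigmaZ ⊗ₖ 1) := by
        rw [sigmaZ_kronecker_one_mul_self, mul_one, Rmat_mul_Rmat_neg, smul_mul_assoc, one_mul,
          neg_smul]

end SixVertex

/-! ### The transfer matrix of a chain -/

section ChainTransfer

variable {A ι : Type*} [Ring A] [Algebra ℂ A]

/-- The transfer matrix of the open chain formed by the sites of the list `l`, where the operators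
at site `k` are represented in `A` through `φ k`. It differs from `Tmat` in that the order of the
sites is arbitrary, as is needed to express the symmetry under `z ↦ -z`. -/
def chainTransfer (φ : ι → Matrix (Fin 2) (Fin 2) ℂ →ₐ[ℂ] A) (η : ℂ) (ξ : ι → ℂ)
    (ζp ζm κp κm τp τm : ℂ) (l : List ι) (z : ℂ) : A :=
  doubleRow (Kplus η ζp κp τp z) (Kminus η ζm κm τm z)
    (fun k => localOp (φ k) (Rmat η (z - ξ k - η / 2)))
    (fun k => localOp (φ k) (Rmat η (z + ξ k - η / 2))) l

lemma pairwise_commutingEntries_localOp {φ : ι → Matrix (Fin 2) (Fin 2) ℂ →ₐ[ℂ] A}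
    (hφ : Pairwise fun j k => ∀ E F, Commute (φ j E) (φ k F))
    (r : ι → Matrix (Fin 2 × Fin 2) (Fin 2 × Fin 2) ℂ) :
    Pairwise fun j k => CommutingEntries (localOp (φ j) (r j)) (localOp (φ k) (r k)) :=
  fun _ _ hjk => commutingEntries_localOp (hφ hjk) _ _

lemma auxBlocks_Mhat {N : ℕ} (η : ℂ) (ξ : Fin N → ℂ) (z : ℂ) :
    auxBlocks (Mhat N η ξ z) =
      ((List.finRange N).map fun k => localOp (siteOp k) (Rmat η (z + ξ k - η / 2))).prod := by
  have crossed_argument (k : Fin N) : -(-z - ξ k - η / 2) - η = z + ξ k - η / 2 := by ring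
  rw [Mhat, map_smul, map_mul, map_mul, auxBlocks_auxOp, auxBlocks_pt0,
    constEntries_sigmaY_mul_transpose_mul, auxBlocks_Mmono,
    crossTranspose_list_prod_map (pairwise_commutingEntries_localOp siteOp_commute _)
      (List.nodup_reverse.2 (List.nodup_finRange N)), List.reverse_reverse]
  simp only [crossTranspose_localOp_Rmat, crossed_argument, ← neg_one_smul ℂ (localOp _ _),
    list_prod_map_smul, List.length_finRange, smul_smul, ← mul_pow]
  norm_num

lemma Tmat_eq_chainTransfer {N : ℕ} (η : ℂ) (ξ : Fin N → ℂ) (ζp ζm κp κm τp τm z : ℂ) :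
    Tmat N η ξ ζp ζm κp κm τp τm z =
      chainTransfer siteOp η ξ ζp ζm κp κm τp τm (List.finRange N).reverse z := by
  rw [Tmat, tr0_eq_trace, map_mul, map_mul, map_mul, auxBlocks_auxOp, auxBlocks_auxOp,
    auxBlocks_Mmono, auxBlocks_Mhat, chainTransfer, doubleRow, List.reverse_reverse]

lemma adjugate_Kmat (η z ζ κ τ : ℂ) : (Kmat η z ζ κ τ).adjugate = Kmat η (η - z) ζ κ τ := by
  have offdiag_argument : 2 * (η - z) - η = -(2 * z - η) := by ring
  rw [Kmat, Kmat, Matrix.adjugate_smul, Matrix.adjugate_fin_two_of, offdiag_argument, sinh_neg]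
  simp only [Fintype.card_fin, Nat.add_one_sub_one, pow_one, mul_neg]
  ring_nf

lemma adjugate_Kplus (η ζ κ τ z : ℂ) :
    (Kplus η ζ κ τ z).adjugate = Kminus η ζ κ τ (-z) := by
  rw [Kplus, Kminus, adjugate_Kmat, sub_add_cancel_right]

lemma adjugate_Kminus (η ζ κ τ z : ℂ) :
    (Kminus η ζ κ τ z).adjugate = Kplus η ζ κ τ (-z) := by
  rw [Kplus, Kminus, adjugate_Kmat, neg_add_eq_sub]

lemma chainTransfer_neg {φ : ι → Matrix (Fin 2) (Fin 2) ℂ →ₐ[ℂ] A}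
    (hφ : Pairwise fun j k => ∀ E F, Commute (φ j E) (φ k F)) (η : ℂ) (ξ : ι → ℂ)
    (ζp ζm κp κm τp τm : ℂ) {l : List ι} (hl : l.Nodup) (z : ℂ) :
    chainTransfer φ η ξ ζp ζm κp κm τp τm l (-z) =
      chainTransfer φ η (-ξ) ζm ζp κm κp τm τp l.reverse z := by
  have crossed_minus (k : ι) : -(-z - ξ k - η / 2) - η = z - (-ξ) k - η / 2 := by
    rw [Pi.neg_apply]; ring
  have crossed_plus (k : ι) : -(-z + ξ k - η / 2) - η = z + (-ξ) k - η / 2 := by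
    rw [Pi.neg_apply]; ring
  have signs_cancel := doubleRow_smul 1 1 (-1) (-1) (Kplus η ζm κm τm z) (Kminus η ζp κp τp z)
    (fun k => localOp (φ k) (Rmat η (z - (-ξ) k - η / 2)))
    (fun k => localOp (φ k) (Rmat η (z + (-ξ) k - η / 2))) l.reverse
  simp only [neg_smul, one_smul, mul_one, mul_neg, neg_neg, one_pow] at signs_cancel
  rw [chainTransfer, doubleRow_eq_crossTranspose (pairwise_commutingEntries_localOp hφ _)
    (pairwise_commutingEntries_localOp hφ _) _ _ hl, chainTransfer, ← signs_cancel]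
  simp only [crossTranspose_localOp_Rmat, crossed_minus, crossed_plus, adjugate_Kplus,
    adjugate_Kminus, neg_neg]

end ChainTransfer

/-! ### Special points -/

section SpecialPoints

variable {A ι : Type*} [Ring A] [Algebra ℂ A]

lemma Kminus_half {ζ : ℂ} (hζ : sinh ζ ≠ 0) (η κ τ : ℂ) : Kminus η ζ κ τ (η / 2) = 1 := by
  simp [Kminus, Kmat, mul_div_cancel₀, hζ, Matrix.one_fin_two]

lemma trace_Kplus {ζ : ℂ} (hζ : sinh ζ ≠ 0) (η κ τ z : ℂ) :
    (Kplus η ζ κ τ z).trace = 2 * cosh (z + η / 2) := by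
  have first_argument : z + η - η / 2 + ζ = ζ + (z + η / 2) := by ring
  have second_argument : ζ - (z + η) + η / 2 = ζ - (z + η / 2) := by ring
  rw [Kplus, Kmat, Matrix.trace_smul, Matrix.trace_fin_two_of, first_argument, second_argument,
    sinh_add ζ, sinh_sub ζ, smul_eq_mul]
  field_simp
  ring

lemma trace_Kplus_mul_sigmaZ (η ζ κ τ z : ℂ) :
    (Kplus η ζ κ τ z * sigmaZ).trace = 2 * sinh (z + η / 2) * (cosh ζ / sinh ζ) := by
  have first_argument : z + η - η / 2 + ζ = ζ + (z + η / 2) := by ring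
  have second_argument : ζ - (z + η) + η / 2 = ζ - (z + η / 2) := by ring
  rw [Kplus, Kmat, sigmaZ, smul_mul_assoc, Matrix.trace_smul, Matrix.mul_fin_two,
    Matrix.trace_fin_two_of, first_argument, second_argument, sinh_add ζ, sinh_sub ζ, smul_eq_mul]
  ring

lemma chainTransfer_half (φ : ι → Matrix (Fin 2) (Fin 2) ℂ →ₐ[ℂ] A) (η : ℂ) (ξ : ι → ℂ)
    {ζp ζm : ℂ} (κp κm τp τm : ℂ) (hζp : sinh ζp ≠ 0) (hζm : sinh ζm ≠ 0) (l : List ι) :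
    chainTransfer φ η ξ ζp ζm κp κm τp τm l (η / 2) =
      ((l.map fun k => sinh (η - ξ k) * sinh (η + ξ k)).prod * (2 * cosh η)) • 1 := by
  have unitarity (k : ι) :
      Rmat η (η / 2 - ξ k - η / 2) * (1 ⊗ₖ 1) * Rmat η (η / 2 + ξ k - η / 2) =
        (sinh (η - ξ k) * sinh (η + ξ k)) • (1 ⊗ₖ 1) := by
    rw [sub_sub_cancel_left, add_sub_cancel_left, Matrix.one_kronecker_one, mul_one]
    simpa [← sub_eq_add_neg] using Rmat_mul_Rmat_neg η (-ξ k)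
  rw [chainTransfer, Kminus_half hζm,
    doubleRow_of_dressing fun k => localOp_mul_constEntries_mul_localOp (φ k) (unitarity k),
    mul_one, trace_Kplus hζp, add_halves]

lemma chainTransfer_neg_half {φ : ι → Matrix (Fin 2) (Fin 2) ℂ →ₐ[ℂ] A}
    (hφ : Pairwise fun j k => ∀ E F, Commute (φ j E) (φ k F)) (η : ℂ) (ξ : ι → ℂ) {ζp ζm : ℂ}
    (κp κm τp τm : ℂ) (hζp : sinh ζp ≠ 0) (hζm : sinh ζm ≠ 0) {l : List ι} (hl : l.Nodup) :
    chainTransfer φ η ξ ζp ζm κp κm τp τm l (-(η / 2)) =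
      ((l.map fun k => sinh (η - ξ k) * sinh (η + ξ k)).prod * (2 * cosh η)) • 1 := by
  rw [chainTransfer_neg hφ η ξ ζp ζm κp κm τp τm hl,
    chainTransfer_half φ η (-ξ) κm κp τm τp hζm hζp, List.map_reverse, List.prod_reverse]
  simp only [Pi.neg_apply, sub_neg_eq_add, ← sub_eq_add_neg, mul_comm (sinh (η + _))]

lemma sinh_add_pi_mul_I_div_two (z : ℂ) : sinh (z + Real.pi * I / 2) = I * cosh z := by
  rw [mul_div_right_comm, sinh_add, sinh_mul_I, cosh_mul_I, sin_pi_div_two, cos_pi_div_two]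
  ring

lemma sinh_sub_pi_mul_I_div_two (z : ℂ) : sinh (z - Real.pi * I / 2) = -I * cosh z := by
  rw [mul_div_right_comm, sinh_sub, sinh_mul_I, cosh_mul_I, sin_pi_div_two, cos_pi_div_two]
  ring

lemma Kminus_half_sub_pi_mul_I_div_two (η ζ κ τ : ℂ) :
    Kminus η ζ κ τ (η / 2 - Real.pi * I / 2) = (-I * (cosh ζ / sinh ζ)) • sigmaZ := by
  have first_argument : η / 2 - Real.pi * I / 2 - η / 2 + ζ = ζ - Real.pi * I / 2 := by ring
  have offdiag_argument : 2 * (η / 2 - Real.pi * I / 2) - η = -(Real.pi * I) := by ring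
  have second_argument : ζ - (η / 2 - Real.pi * I / 2) + η / 2 = ζ + Real.pi * I / 2 := by ring
  rw [Kminus, Kmat, sigmaZ, first_argument, offdiag_argument, second_argument,
    sinh_sub_pi_mul_I_div_two, sinh_add_pi_mul_I_div_two, sinh_neg, sinh_mul_I, sin_pi]
  simp only [zero_mul, neg_zero, mul_zero, Matrix.smul_of, Matrix.smul_cons, Matrix.smul_empty,
    smul_eq_mul]
  ring_nf

lemma chainTransfer_half_sub_pi_mul_I_div_two (φ : ι → Matrix (Fin 2) (Fin 2) ℂ →ₐ[ℂ] A) (η : ℂ)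
    (ξ : ι → ℂ) (ζp ζm κp κm τp τm : ℂ) (l : List ι) :
    chainTransfer φ η ξ ζp ζm κp κm τp τm l (η / 2 - Real.pi * I / 2) =
      ((l.map fun k => -(cosh (η - ξ k) * cosh (η + ξ k))).prod *
        (-2 * cosh η * (cosh ζm / sinh ζm) * (cosh ζp / sinh ζp))) • 1 := by
  have twisted_unitarity (k : ι) :
      Rmat η (η / 2 - Real.pi * I / 2 - ξ k - η / 2) * (sigmaZ ⊗ₖ 1) *
        Rmat η (η / 2 - Real.pi * I / 2 + ξ k - η / 2) =
      -(cosh (η - ξ k) * cosh (η + ξ k)) • (sigmaZ ⊗ₖ 1) := by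
    have left_argument :
        η / 2 - Real.pi * I / 2 - ξ k - η / 2 = -ξ k - Real.pi * I / 2 := by ring
    have right_argument : η / 2 - Real.pi * I / 2 + ξ k - η / 2 =
        -(-ξ k - Real.pi * I / 2) - Real.pi * I := by ring
    rw [left_argument, right_argument, Rmat_mul_sigmaZ_mul_Rmat, ← add_sub_assoc,
      ← sub_eq_add_neg, sinh_sub_pi_mul_I_div_two, sub_sub_eq_add_sub, add_sub_right_comm,
      sub_neg_eq_add, sinh_add_pi_mul_I_div_two]
    congr 2
    linear_combination -(cosh (η - ξ k) * cosh (η + ξ k)) * I_mul_I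
  have trace_eq :
      (Kplus η ζp κp τp (η / 2 - Real.pi * I / 2) * (-I * (cosh ζm / sinh ζm)) • sigmaZ).trace =
        -2 * cosh η * (cosh ζm / sinh ζm) * (cosh ζp / sinh ζp) := by
    rw [mul_smul_comm, Matrix.trace_smul, trace_Kplus_mul_sigmaZ, sub_add_eq_add_sub, add_halves,
      sinh_sub_pi_mul_I_div_two, smul_eq_mul]
    linear_combination
      (2 * cosh η * (cosh ζm / sinh ζm) * (cosh ζp / sinh ζp)) * I_mul_I
  rw [chainTransfer, Kminus_half_sub_pi_mul_I_div_two, doubleRow_of_dressing (fun k => ?_),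
    trace_eq]
  rw [map_smul, mul_smul_comm, smul_mul_assoc,
    localOp_mul_constEntries_mul_localOp (φ k) (twisted_unitarity k), smul_comm]

lemma chainTransfer_neg_half_sub_pi_mul_I_div_two {φ : ι → Matrix (Fin 2) (Fin 2) ℂ →ₐ[ℂ] A}
    (hφ : Pairwise fun j k => ∀ E F, Commute (φ j E) (φ k F)) (η : ℂ) (ξ : ι → ℂ)
    (ζp ζm κp κm τp τm : ℂ) {l : List ι} (hl : l.Nodup) :
    chainTransfer φ η ξ ζp ζm κp κm τp τm l (-(η / 2 - Real.pi * I / 2)) =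
      ((l.map fun k => -(cosh (η - ξ k) * cosh (η + ξ k))).prod *
        (-2 * cosh η * (cosh ζm / sinh ζm) * (cosh ζp / sinh ζp))) • 1 := by
  rw [chainTransfer_neg hφ η ξ ζp ζm κp κm τp τm hl, chainTransfer_half_sub_pi_mul_I_div_two,
    List.map_reverse, List.prod_reverse, mul_right_comm (-2 * cosh η)]
  simp only [Pi.neg_apply, sub_neg_eq_add, ← sub_eq_add_neg, mul_comm (cosh (η + _))]

lemma prod_map_reverse_finRange {M : Type*} [CommMonoid M] {N : ℕ} (f : Fin N → M) :
    ((List.finRange N).reverse.map f).prod = ∏ k, f k := by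
  rw [List.map_reverse, List.prod_reverse, Fin.prod_univ_def]

lemma prod_sinh_mul_sinh {N : ℕ} (η : ℂ) (ξ : Fin N → ℂ) :
    ∏ k, sinh (η - ξ k) * sinh (η + ξ k) =
      (-1) ^ N * (aF N η ξ (η / 2) * dF N η ξ (-(η / 2))) := by
  have a_argument (k : Fin N) : η / 2 - ξ k + η / 2 = η - ξ k := by ring
  have d_argument (k : Fin N) : -(η / 2) - η - ξ k + η / 2 = -(η + ξ k) := by ring
  have factor (k : Fin N) : sinh (η - ξ k) * sinh (η + ξ k) =
      -1 * (sinh (η - ξ k) * sinh (-(η + ξ k))) := by rw [sinh_neg]; ring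
  simp only [aF, dF, a_argument, d_argument, factor, Finset.prod_mul_distrib, Finset.prod_const,
    Finset.card_univ, Fintype.card_fin]

lemma prod_neg_cosh_mul_cosh {N : ℕ} (η : ℂ) (ξ : Fin N → ℂ) :
    ∏ k, -(cosh (η - ξ k) * cosh (η + ξ k)) =
      aF N η ξ (Real.pi * I / 2 + η / 2) * dF N η ξ (Real.pi * I / 2 - η / 2) := by
  have a_argument (k : Fin N) :
      Real.pi * I / 2 + η / 2 - ξ k + η / 2 = η - ξ k + Real.pi * I / 2 := by ring
  have d_argument (k : Fin N) :
      Real.pi * I / 2 - η / 2 - η - ξ k + η / 2 = -(η + ξ k) + Real.pi * I / 2 := by ring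
  rw [aF, dF, aF, ← Finset.prod_mul_distrib]
  refine Finset.prod_congr rfl fun k _ => ?_
  rw [a_argument, d_argument, sinh_add_pi_mul_I_div_two, sinh_add_pi_mul_I_div_two, cosh_neg]
  linear_combination -(cosh (η - ξ k) * cosh (η + ξ k)) * I_mul_I

end SpecialPoints

/-! ### Asymptotics -/

section Asymptotics

lemma tendsto_exp_neg_ofReal :
    Filter.Tendsto (fun x : ℝ => exp (-(x : ℂ))) Filter.atTop (nhds 0) := by
  rw [Complex.tendsto_exp_nhds_zero_iff]
  simpa using Filter.tendsto_neg_atTop_atBot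

lemma tendsto_exp_neg_mul_sinh_add (c : ℂ) :
    Filter.Tendsto (fun x : ℝ => exp (-(x : ℂ)) * sinh (x + c)) Filter.atTop
      (nhds (exp c / 2)) := by
  have h : Filter.Tendsto (fun x : ℝ => (exp c - exp (-(x : ℂ)) ^ 2 * exp (-c)) / 2) Filter.atTop
      (nhds ((exp c - 0 ^ 2 * exp (-c)) / 2)) :=
    (((tendsto_exp_neg_ofReal.pow 2).mul_const _).const_sub _).div_const _
  rw [zero_pow two_ne_zero, zero_mul, sub_zero] at h
  refine h.congr fun x => ?_
  have exp_neg_mul_exp : exp (-(x : ℂ)) * exp x = 1 := by rw [← exp_add, neg_add_cancel, exp_zero]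
  rw [Complex.sinh, neg_add, exp_add, exp_add]
  linear_combination (-exp c / 2) * exp_neg_mul_exp

lemma tendsto_exp_neg_sq_mul_sinh_two_mul_add (c : ℂ) :
    Filter.Tendsto (fun x : ℝ => exp (-(x : ℂ)) ^ 2 * sinh (2 * x + c)) Filter.atTop
      (nhds (exp c / 2)) := by
  refine ((tendsto_exp_neg_mul_sinh_add c).comp
    (Filter.tendsto_id.const_mul_atTop (two_pos (α := ℝ)))).congr fun x => ?_
  rw [Function.comp_apply, id, ofReal_mul, ofReal_ofNat, ← exp_nat_mul, Nat.cast_ofNat, mul_neg]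

lemma tendsto_exp_neg_sq_mul_sinh_add (c : ℂ) :
    Filter.Tendsto (fun x : ℝ => exp (-(x : ℂ)) ^ 2 * sinh (x + c)) Filter.atTop (nhds 0) := by
  have h := tendsto_exp_neg_ofReal.mul (tendsto_exp_neg_mul_sinh_add c)
  rw [zero_mul] at h
  exact h.congr fun x => by ring

lemma tendsto_exp_neg_sq_mul_sinh_sub (c : ℂ) :
    Filter.Tendsto (fun x : ℝ => exp (-(x : ℂ)) ^ 2 * sinh (c - x)) Filter.atTop (nhds 0) := by
  rw [← neg_zero]
  refine (tendsto_exp_neg_sq_mul_sinh_add (-c)).neg.congr fun x => ?_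
  rw [← mul_neg, ← sinh_neg, neg_add, neg_neg, neg_add_eq_sub]

/-- The limit of `e^{-2λ} K(λ + c)` as `λ → +∞`. -/
def asymptoticK (η c ζ κ τ : ℂ) : Matrix (Fin 2) (Fin 2) ℂ :=
  !![0, κ * exp τ * exp (2 * c - η) / 2 / sinh ζ; κ * exp (-τ) * exp (2 * c - η) / 2 / sinh ζ, 0]

lemma exp_neg_sq_smul_Kmat (η c ζ κ τ x : ℂ) :
    exp (-x) ^ 2 • Kmat η (x + c) ζ κ τ =
      !![1 / sinh ζ * (exp (-x) ^ 2 * sinh (x + (c - η / 2 + ζ))),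
         1 / sinh ζ * (κ * exp τ) * (exp (-x) ^ 2 * sinh (2 * x + (2 * c - η)));
         1 / sinh ζ * (κ * exp (-τ)) * (exp (-x) ^ 2 * sinh (2 * x + (2 * c - η))),
         1 / sinh ζ * (exp (-x) ^ 2 * sinh (ζ - c + η / 2 - x))] := by
  have first_argument : x + c - η / 2 + ζ = x + (c - η / 2 + ζ) := by ring
  have offdiagonal_argument : 2 * (x + c) - η = 2 * x + (2 * c - η) := by ring
  have second_argument : ζ - (x + c) + η / 2 = ζ - c + η / 2 - x := by ring
  simp only [Kmat, first_argument, offdiagonal_argument, second_argument, Matrix.smul_of,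
    Matrix.smul_cons, Matrix.smul_empty, smul_eq_mul, mul_left_comm, mul_assoc]

lemma tendsto_exp_neg_sq_smul_Kmat (η c ζ κ τ : ℂ) :
    Filter.Tendsto (fun x : ℝ => exp (-(x : ℂ)) ^ 2 • Kmat η (x + c) ζ κ τ) Filter.atTop
      (nhds (asymptoticK η c ζ κ τ)) := by
  have first_diagonal :=
    (tendsto_exp_neg_sq_mul_sinh_add (c - η / 2 + ζ)).const_mul (1 / sinh ζ)
  have second_diagonal :=
    (tendsto_exp_neg_sq_mul_sinh_sub (ζ - c + η / 2)).const_mul (1 / sinh ζ)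
  rw [mul_zero] at first_diagonal second_diagonal
  have offdiagonal (b : ℂ) :
      Filter.Tendsto
        (fun x : ℝ => 1 / sinh ζ * b * (exp (-(x : ℂ)) ^ 2 * sinh (2 * x + (2 * c - η))))
        Filter.atTop (nhds (b * exp (2 * c - η) / 2 / sinh ζ)) := by
    have limit_eq : b * exp (2 * c - η) / 2 / sinh ζ =
        1 / sinh ζ * b * (exp (2 * c - η) / 2) := by ring
    rw [limit_eq]
    exact (tendsto_exp_neg_sq_mul_sinh_two_mul_add (2 * c - η)).const_mul _
  simp only [exp_neg_sq_smul_Kmat]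
  refine tendsto_pi_nhds.2 fun i => tendsto_pi_nhds.2 fun j => ?_
  fin_cases i <;> fin_cases j
  · exact first_diagonal
  · exact offdiagonal (κ * exp τ)
  · exact offdiagonal (κ * exp (-τ))
  · exact second_diagonal

/-- The limit of `e^{-λ} R(λ + c)` as `λ → +∞`. -/
def asymptoticR (η c : ℂ) : Matrix (Fin 2 × Fin 2) (Fin 2 × Fin 2) ℂ :=
  Matrix.diagonal fun p => exp (if p.1 = p.2 then c + η else c) / 2

lemma tendsto_exp_neg_smul_Rmat (η c : ℂ) :
    Filter.Tendsto (fun x : ℝ => exp (-(x : ℂ)) • Rmat η (x + c)) Filter.atTop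
      (nhds (asymptoticR η c)) := by
  refine tendsto_pi_nhds.2 fun p => tendsto_pi_nhds.2 fun q => ?_
  have sinh_eta_term := tendsto_exp_neg_ofReal.mul_const (sinh η)
  rw [zero_mul] at sinh_eta_term
  simp only [Matrix.smul_apply, smul_eq_mul, Rmat, asymptoticR, Matrix.diagonal_apply]
  split_ifs
  · simpa only [add_assoc] using tendsto_exp_neg_mul_sinh_add (c + η)
  · exact tendsto_exp_neg_mul_sinh_add c
  · exact sinh_eta_term
  · simp

lemma asymptoticR_mul_asymptoticK_mul_asymptoticR {η c c' : ℂ} (h : c + c' + η = 0)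
    (b ζ κ τ : ℂ) :
    asymptoticR η c * (asymptoticK η b ζ κ τ ⊗ₖ 1) * asymptoticR η c' =
      (1 / 4 : ℂ) • (asymptoticK η b ζ κ τ ⊗ₖ 1) := by
  have left_weight : exp (c + η) * exp c' = 1 := by rw [← exp_add, add_right_comm, h, exp_zero]
  have right_weight : exp c * exp (c' + η) = 1 := by rw [← exp_add, ← add_assoc, h, exp_zero]
  ext ⟨i, a⟩ ⟨j, b⟩
  rw [asymptoticR, asymptoticR, Matrix.mul_diagonal, Matrix.diagonal_mul]
  fin_cases i <;> fin_cases a <;> fin_cases j <;> fin_cases b <;>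
    simp [asymptoticK] <;> grind

lemma trace_asymptoticK_mul_asymptoticK (η ζp ζm κp κm τp τm : ℂ) :
    (asymptoticK η η ζp κp τp * asymptoticK η 0 ζm κm τm).trace =
      1 / 2 * (κp * κm * cosh (τp - τm) / (sinh ζp * sinh ζm)) := by
  have exp_mul_exp : exp (2 * η - η) * exp (2 * 0 - η) = 1 := by
    rw [← exp_add, ← exp_zero]
    ring_nf
  rw [asymptoticK, asymptoticK, Matrix.mul_fin_two, Matrix.trace_fin_two_of, Complex.cosh,
    neg_sub, sub_eq_add_neg τp, sub_eq_add_neg τm, exp_add, exp_add]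
  linear_combination (exp τp * exp (-τm) + exp (-τp) * exp τm) * κp * κm / (4 * sinh ζp * sinh ζm)
    * exp_mul_exp

variable {A ι : Type*} [Ring A] [Algebra ℂ A]

lemma exp_neg_smul_chainTransfer (φ : ι → Matrix (Fin 2) (Fin 2) ℂ →ₐ[ℂ] A) (η : ℂ) (ξ : ι → ℂ)
    (ζp ζm κp κm τp τm : ℂ) (l : List ι) (x : ℂ) :
    exp (-(2 * x * (l.length + 2))) • chainTransfer φ η ξ ζp ζm κp κm τp τm l x =
      doubleRow (exp (-x) ^ 2 • Kmat η (x + η) ζp κp τp) (exp (-x) ^ 2 • Kmat η (x + 0) ζm κm τm)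
        (fun k => localOp (φ k) (exp (-x) • Rmat η (x + (-ξ k - η / 2))))
        (fun k => localOp (φ k) (exp (-x) • Rmat η (x + (ξ k - η / 2)))) l := by
  have exp_eq : exp (-(2 * x * (l.length + 2))) =
      exp (-x) ^ 2 * exp (-x) ^ 2 * (exp (-x) * exp (-x)) ^ l.length := by
    simp only [← exp_add, ← exp_nat_mul]
    push_cast
    ring_nf
  simp only [map_smul, doubleRow_smul]
  rw [exp_eq, chainTransfer, Kplus, Kminus, add_zero]
  simp only [sub_eq_add_neg, add_assoc]

variable [TopologicalSpace A] [IsTopologicalRing A] [ContinuousSMul ℂ A]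

lemma tendsto_chainTransfer_atTop (φ : ι → Matrix (Fin 2) (Fin 2) ℂ →ₐ[ℂ] A) (η : ℂ)
    (ξ : ι → ℂ) (ζp ζm κp κm τp τm : ℂ) (l : List ι) :
    Filter.Tendsto
      (fun x : ℝ => exp (-(2 * (x : ℂ) * (l.length + 2))) •
        chainTransfer φ η ξ ζp ζm κp κm τp τm l x)
      Filter.atTop
      (nhds (((2 : ℂ) ^ (-(2 * (l.length : ℤ) + 1)) *
        (κp * κm * cosh (τp - τm) / (sinh ζp * sinh ζm))) • 1)) := by
  have exponent_sum (k : ι) : -ξ k - η / 2 + (ξ k - η / 2) + η = 0 := by ring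
  have weight_eq : (1 / 4 : ℂ) ^ l.length * (1 / 2) = 2 ^ (-(2 * (l.length : ℤ) + 1)) := by
    rw [zpow_neg, zpow_add_one₀ two_ne_zero, zpow_mul, zpow_natCast, mul_inv, ← inv_pow, one_div,
      one_div, zpow_ofNat]
    norm_num
  have tendsto_localOp (k : ι) (c : ℂ) :=
    ((continuous_localOp (φ k)).tendsto _).comp (tendsto_exp_neg_smul_Rmat η c)
  have h := tendsto_doubleRow (tendsto_exp_neg_sq_smul_Kmat η η ζp κp τp)
    (tendsto_exp_neg_sq_smul_Kmat η 0 ζm κm τm) (fun k => tendsto_localOp k (-ξ k - η / 2))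
    (fun k => tendsto_localOp k (ξ k - η / 2)) l
  rw [doubleRow_of_dressing fun k => localOp_mul_constEntries_mul_localOp (φ k)
      (asymptoticR_mul_asymptoticK_mul_asymptoticR (exponent_sum k) 0 ζm κm τm),
    trace_asymptoticK_mul_asymptoticK, List.map_const', List.prod_replicate, ← mul_assoc,
    weight_eq] at h
  exact h.congr fun x => (exp_neg_smul_chainTransfer φ η ξ ζp ζm κp κm τp τm l x).symm

lemma tendsto_chainTransfer_atBot {φ : ι → Matrix (Fin 2) (Fin 2) ℂ →ₐ[ℂ] A}
    (hφ : Pairwise fun j k => ∀ E F, Commute (φ j E) (φ k F)) (η : ℂ) (ξ : ι → ℂ)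
    (ζp ζm κp κm τp τm : ℂ) {l : List ι} (hl : l.Nodup) :
    Filter.Tendsto
      (fun x : ℝ => exp (2 * (x : ℂ) * (l.length + 2)) •
        chainTransfer φ η ξ ζp ζm κp κm τp τm l x)
      Filter.atBot
      (nhds (((2 : ℂ) ^ (-(2 * (l.length : ℤ) + 1)) *
        (κp * κm * cosh (τp - τm) / (sinh ζp * sinh ζm))) • 1)) := by
  have h := (tendsto_chainTransfer_atTop φ η (-ξ) ζm ζp κm κp τm τp l.reverse).comp
    Filter.tendsto_neg_atBot_atTop
  rw [List.length_reverse, mul_comm κm, mul_comm (sinh ζm), ← cosh_neg, neg_sub] at h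
  refine h.congr fun x => ?_
  rw [Function.comp_apply, ← chainTransfer_neg hφ η ξ ζp ζm κp κm τp τm hl, ofReal_neg, neg_neg,
    mul_neg, neg_mul, neg_neg]

end Asymptotics

/-- part of Proposition 2.1: central values and scalar asymptotics of the
transfer matrix. -/
theorem statement13
    (N : ℕ) (hN : 1 ≤ N) (η : ℂ) (ξ : Fin N → ℂ)
    (ζp ζm κp κm τp τm : ℂ)
    (hζp : Complex.sinh ζp ≠ 0) (hζm : Complex.sinh ζm ≠ 0) :
    (Tmat N η ξ ζp ζm κp κm τp τm (η / 2) =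
        ((-1 : ℂ) ^ N * 2 * Complex.cosh η * aF N η ξ (η / 2) * dF N η ξ (-(η / 2))) •
          (1 : Matrix (Fin N → Fin 2) (Fin N → Fin 2) ℂ) ∧
      Tmat N η ξ ζp ζm κp κm τp τm (-(η / 2)) =
        ((-1 : ℂ) ^ N * 2 * Complex.cosh η * aF N η ξ (η / 2) * dF N η ξ (-(η / 2))) •
          (1 : Matrix (Fin N → Fin 2) (Fin N → Fin 2) ℂ)) ∧
    (Tmat N η ξ ζp ζm κp κm τp τm (η / 2 - Real.pi * Complex.I / 2) =
        (-2 * Complex.cosh η * (Complex.cosh ζm / Complex.sinh ζm) *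
            (Complex.cosh ζp / Complex.sinh ζp) *
            aF N η ξ (Real.pi * Complex.I / 2 + η / 2) *
            dF N η ξ (Real.pi * Complex.I / 2 - η / 2)) •
          (1 : Matrix (Fin N → Fin 2) (Fin N → Fin 2) ℂ) ∧
      Tmat N η ξ ζp ζm κp κm τp τm (-(η / 2 - Real.pi * Complex.I / 2)) =
        (-2 * Complex.cosh η * (Complex.cosh ζm / Complex.sinh ζm) *
            (Complex.cosh ζp / Complex.sinh ζp) *
            aF N η ξ (Real.pi * Complex.I / 2 + η / 2) *
            dF N η ξ (Real.pi * Complex.I / 2 - η / 2)) •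
          (1 : Matrix (Fin N → Fin 2) (Fin N → Fin 2) ℂ)) ∧
    (Filter.Tendsto
        (fun x : ℝ => Complex.exp (-(2 * (x : ℂ) * ((N : ℂ) + 2))) •
          Tmat N η ξ ζp ζm κp κm τp τm (x : ℂ))
        Filter.atTop
        (nhds (((2 : ℂ) ^ (-(2 * (N : ℤ) + 1)) * (κp * κm * Complex.cosh (τp - τm) /
            (Complex.sinh ζp * Complex.sinh ζm))) •
          (1 : Matrix (Fin N → Fin 2) (Fin N → Fin 2) ℂ))) ∧
      Filter.Tendsto
        (fun x : ℝ => Complex.exp (2 * (x : ℂ) * ((N : ℂ) + 2)) •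
          Tmat N η ξ ζp ζm κp κm τp τm (x : ℂ))
        Filter.atBot
        (nhds (((2 : ℂ) ^ (-(2 * (N : ℤ) + 1)) * (κp * κm * Complex.cosh (τp - τm) /
            (Complex.sinh ζp * Complex.sinh ζm))) •
          (1 : Matrix (Fin N → Fin 2) (Fin N → Fin 2) ℂ)))) := by
  have sites_commute := siteOp_commute (R := ℂ) (n := Fin 2) (ι := Fin N)
  have sites_nodup : (List.finRange N).reverse.Nodup :=
    List.nodup_reverse.2 (List.nodup_finRange N)
  have sites_length : (List.finRange N).reverse.length = N := by simp
  simp only [Tmat_eq_chainTransfer]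
  refine ⟨⟨?_, ?_⟩, ⟨?_, ?_⟩, ?_, ?_⟩
  · rw [chainTransfer_half _ _ _ _ _ _ _ hζp hζm, prod_map_reverse_finRange, prod_sinh_mul_sinh]
    ring_nf
  · rw [chainTransfer_neg_half sites_commute _ _ _ _ _ _ hζp hζm sites_nodup,
      prod_map_reverse_finRange, prod_sinh_mul_sinh]
    ring_nf
  · rw [chainTransfer_half_sub_pi_mul_I_div_two, prod_map_reverse_finRange,
      prod_neg_cosh_mul_cosh]
    ring_nf
  · rw [chainTransfer_neg_half_sub_pi_mul_I_div_two sites_commute _ _ _ _ _ _ _ _ sites_nodup,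
      prod_map_reverse_finRange, prod_neg_cosh_mul_cosh]
    ring_nf
  · simpa only [sites_length] using tendsto_chainTransfer_atTop siteOp η ξ ζp ζm κp κm τp τm
      (List.finRange N).reverse
  · simpa only [sites_length] using
      tendsto_chainTransfer_atBot sites_commute η ξ ζp ζm κp κm τp τm sites_nodup

end XXZ
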